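/- arXiv:1412.2737 — 6 statements merged into one kernel-verified Lean document; each statement's English description precedes it below -/
import Mathlib

section
/- Let w = w₁⋯w_M (with M ≥ 2) be a finite binary word which is a maximal decoration and which is even. Then for every i with 2 ≤ i ≤ M, the one-sided sequence w_i w_{i+1} ⋯ w_M 0 1 0^∞ is less than or equal to the sequence w₁ w₂ ⋯ w_M 0 1 0^∞ in the unimodal order. -/
/-!
Write `S = w010^∞`, `M = |w|`, `j = i - 1`, and compare `S` with `σ^j S`. If the two differ at an
index `n < M - j`, then only letters of `w` are involved, and the maximality of `w0` decides.
Otherwise the suffix of `w` of length `M - j` equals the prefix `v` of `w` of that length. Let `b`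
be the letter different from `S (M - j)`. In the comparison of `(wb)^∞` with its `j`-th shift the
first difference is at `M - j`, so maximality of `wb` forces `S (M - j) = 1` if `v` is even and
`S (M - j) = 0` if `v` is odd. If `v` is even, then `S` wins at `M - j`, where `σ^j S` has `0`.
If `v` is odd, both sequences continue with `v0`, and then `σ^j S` continues with `10^∞`.
Either `S` has `0` next and wins because `v0` is odd, or both start with the even word `v01`, and
`S` wins at its first later `1` (there is one, since `S (M + 1) = 1`).
-/

/-- The sequence `u^∞ : ℕ → Bool`, the infinite repetition of the finite word `u`. -/
def periodicSeq (u : List Bool) : ℕ → Bool := fun n => u.getD (n % u.length) false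

/-- The sequence given by the finite word `u` followed by the infinite tail `t`. -/
def wordSeq (u : List Bool) (t : ℕ → Bool) : ℕ → Bool :=
  fun n => if h : n < u.length then u.get ⟨n, h⟩ else t (n - u.length)

/-- The sequence `0^∞` of all zeros. -/
def zeroSeq : ℕ → Bool := fun _ => false

/-- `s >₁ t` in the unimodal order: at the least index `k` where they differ,
`s k > t k` if the number of 1's before `k` is even, and `s k < t k` otherwise. -/
def unimodalGT (s t : ℕ → Bool) : Prop :=
  ∃ k : ℕ, (∀ i < k, s i = t i) ∧ s k ≠ t k ∧
    (if Even (((Finset.range k).filter (fun i => s i = true)).card)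
      then s k = true else t k = true)

/-- `s ≥₁ t` in the unimodal order. -/
def unimodalGE (s t : ℕ → Bool) : Prop := s = t ∨ unimodalGT s t

/-- `s ≤₁ t` in the unimodal order. -/
def unimodalLE (s t : ℕ → Bool) : Prop := s = t ∨ unimodalGT t s

/-- A finite word `u` is a maximal code if `σ^i(u^∞) ≤₁ u^∞` for all `i ≥ 1`. -/
def maximalCode (u : List Bool) : Prop :=
  ∀ i ≥ 1, unimodalLE (fun n => periodicSeq u (n + i)) (periodicSeq u)

/-- A finite word `w` is a maximal decoration if both `w0` and `w1` are maximal codes. -/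
def maximalDecoration (w : List Bool) : Prop :=
  maximalCode (w ++ [false]) ∧ maximalCode (w ++ [true])

/-- The `i`-th symbol of the NBT code of `m/n`: it is `1` iff the segment from `(0,0)` to
`(n,m)` meets a horizontal line `y = k`, `k ∈ ℤ`, at a point with x-coordinate in `(i-1,i+1)`;
equivalently iff there is `0 ≤ k ≤ m` with `m(i-1) < kn < m(i+1)`. -/
def nbtBit (m n i : ℕ) : Bool :=
  decide (∃ k : Fin (m + 1),
    (m : ℤ) * ((i : ℤ) - 1) < ((k : ℕ) : ℤ) * (n : ℤ) ∧
      ((k : ℕ) : ℤ) * (n : ℤ) < (m : ℤ) * ((i : ℤ) + 1))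

/-- The NBT code `c_q = s₀s₁⋯s_n` of `q = m/n`. -/
def nbtCode (m n : ℕ) : List Bool := List.ofFn (fun i : Fin (n + 1) => nbtBit m n i)

/-- The NBT code of a rational number `q`, written in lowest terms. -/
def nbtCodeQ (q : ℚ) : List Bool := nbtCode q.num.toNat q.den

lemma wordSeq_drop (w u : List Bool) (t : ℕ → Bool) (j : ℕ) (hj : j ≤ w.length) :
    wordSeq (w.drop j ++ u) t = fun n => wordSeq (w ++ u) t (n + j) := by
  funext n
  have h : w.drop j ++ u = (w ++ u).drop j := by
    rw [List.drop_append_of_le_length hj]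
  rw [h]
  unfold wordSeq
  simp only [List.length_drop, List.length_append, List.get_eq_getElem, List.getElem_drop]
  by_cases hn : n + j < w.length + u.length
  · rw [dif_pos (by omega), dif_pos hn]
    congr 1
    omega
  · rw [dif_neg (by omega), dif_neg hn]
    congr 1
    omega

lemma periodicSeq_lt (w : List Bool) (b : Bool) (u : List Bool) (t : ℕ → Bool) (n : ℕ)
    (hn : n < w.length) : periodicSeq (w ++ [b]) n = wordSeq (w ++ u) t n := by
  have h1 : n < w.length + u.length := by omega
  have h2 : n % (w.length + 1) = n := Nat.mod_eq_of_lt (by omega)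
  simp [periodicSeq, wordSeq, h1, h2, List.getElem?_append_left hn, List.getElem_append_left hn, hn]

lemma periodicSeq_length (w : List Bool) (b : Bool) :
    periodicSeq (w ++ [b]) w.length = b := by
  have h2 : w.length % (w.length + 1) = w.length := Nat.mod_eq_of_lt (by omega)
  simp [periodicSeq, h2]

/-- Number of `1`s among the first `k` letters of `s`. -/
def onesBefore (s : ℕ → Bool) (k : ℕ) : ℕ :=
  ((Finset.range k).filter (fun i => s i = true)).card

lemma onesBefore_congr {s t : ℕ → Bool} {k : ℕ} (h : ∀ i < k, s i = t i) :
    onesBefore s k = onesBefore t k := by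
  unfold onesBefore
  congr 1
  apply Finset.filter_congr
  intro i hi
  rw [h i (Finset.mem_range.1 hi)]

lemma onesBefore_succ (s : ℕ → Bool) (k : ℕ) :
    onesBefore s (k + 1) = onesBefore s k + if s k = true then 1 else 0 := by
  unfold onesBefore
  rw [Finset.range_add_one, Finset.filter_insert]
  split_ifs <;> simp

/-- The combinatorial core: `S` plays the role of `w010^∞` with `|w| = M`, and `P b` that of
`(wb)^∞`, of which only the first `M + 1` letters matter. -/
lemma shift_le_of_maximal (S : ℕ → Bool) (P : Bool → ℕ → Bool) (M j : ℕ) (hj : 1 ≤ j) (hjM : j ≤ M)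
    (hP : ∀ b, ∀ n < M, P b n = S n) (hPM : ∀ b, P b M = b)
    (hS0 : S M = false) (hS1 : S (M + 1) = true) (hS2 : ∀ n, M + 2 ≤ n → S n = false)
    (hmax : ∀ b, unimodalLE (fun n => P b (n + j)) (P b)) :
    unimodalGT S (fun n => S (n + j)) := by
  by_cases hA : ∃ n, n + j < M ∧ S n ≠ S (n + j)
  · obtain ⟨n, hn, hne⟩ := hA
    rcases hmax false with h | ⟨k, hk, hkne, hk2⟩
    · have := congrFun h n
      rw [hP _ _ hn, hP _ n (by omega)] at this
      exact absurd this.symm hne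
    · have hkn : k ≤ n := by
        by_contra hlt
        have := hk n (by omega)
        simp only at this
        rw [hP _ _ hn, hP _ n (by omega)] at this
        exact hne this
      change (if Even (onesBefore _ k) then _ else _) at hk2
      rw [onesBefore_congr (t := S) (fun i hi => hP _ i (by omega))] at hk2
      simp only at hkne hk2 hk
      rw [hP _ k (by omega), hP _ (k + j) (by omega)] at hkne hk2
      refine ⟨k, fun i hi => ?_, hkne, hk2⟩
      have := hk i hi
      rwa [hP _ i (by omega), hP _ (i + j) (by omega)] at this
  · push Not at hA
    obtain ⟨m, rfl⟩ : ∃ m, M = m + j := ⟨M - j, by omega⟩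
    have key : if Even (onesBefore S m) then S m = true else S m = false := by
      rcases hmax (!S m) with h | ⟨k, hk, hkne, hk2⟩
      · have := congrFun h m
        rw [hPM, hP _ m (by omega)] at this
        simp at this
      · have hkm : k = m := by
          rcases lt_trichotomy k m with hlt | heq | hgt
          · simp only at hkne
            rw [hP _ k (by omega), hP _ (k + j) (by omega)] at hkne
            exact absurd (hA k (by omega)) hkne
          · exact heq
          · have := hk m hgt
            simp only at this
            rw [hPM, hP _ m (by omega)] at this
            simp at this
        subst hkm
        change (if Even (onesBefore _ k) then _ else _) at hk2
        rw [onesBefore_congr (t := S) (fun i hi => hP _ i (by omega))] at hk2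
        simp only at hk2
        rw [hPM, hP _ k (by omega)] at hk2
        simpa using hk2
    by_cases hev : Even (onesBefore S m)
    · rw [if_pos hev] at key
      refine ⟨m, fun i hi => hA i (by omega), by simp [key, hS0], ?_⟩
      change (if Even (onesBefore _ m) then _ else _)
      rwa [if_pos hev]
    · rw [if_neg hev] at key
      have hev1 : ¬ Even (onesBefore S (m + 1)) := by
        rw [onesBefore_succ]; simpa [key] using hev
      have hagree : ∀ i < m + 1, S i = S (i + j) := by
        intro i hi
        rcases Nat.lt_succ_iff_lt_or_eq.1 hi with h | rfl
        · exact hA i (by omega)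
        · rw [key, hS0]
      have hT1 : S (m + 1 + j) = true := by rw [← hS1]; congr 1; omega
      by_cases hs : S (m + 1) = true
      · have hev2 : Even (onesBefore S (m + 2)) := by
          rw [onesBefore_succ, if_pos hs]
          exact (Nat.not_even_iff_odd.1 hev1).add_one
        have hne : S (m + 1) ≠ S (m + j) := by rw [hs, hS0]; simp
        have hj1 : j ≠ 1 := by rintro rfl; exact hne rfl
        -- `j ≠ 1`, so the `1` of `S` at `m + j + 1` lies beyond the common prefix `v01`.
        have hex : ∃ n, m + 2 ≤ n ∧ S n = true := ⟨m + j + 1, by omega, hS1⟩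
        classical
        set k := Nat.find hex with hkdef
        obtain ⟨hk1, hk2⟩ := Nat.find_spec hex
        have hzero : ∀ i, m + 2 ≤ i → i < k → S i = false := by
          intro i hi hik
          have := Nat.find_min hex hik
          simpa [hi] using this
        have hpar : ∀ d, m + 2 + d ≤ k → Even (onesBefore S (m + 2 + d)) := by
          intro d
          induction d with
          | zero => intro _; exact hev2
          | succ d ih =>
            intro hd
            rw [← add_assoc, onesBefore_succ, hzero _ (by omega) (by omega)]
            simpa using ih (by omega)
        have hevk : Even (onesBefore S k) := by
          have := hpar (k - (m + 2)) (by omega)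
          rwa [show m + 2 + (k - (m + 2)) = k by omega] at this
        refine ⟨k, fun i hi => ?_, ?_, ?_⟩
        · rcases lt_trichotomy i (m + 1) with h | rfl | h
          · exact hagree i h
          · simp only; rw [hs, hT1]
          · simp only; rw [hzero i (by omega) hi, hS2 (i + j) (by omega)]
        · simp only
          rw [hk2, hS2 (k + j) (by omega)]; simp
        · change (if Even (onesBefore _ k) then _ else _)
          rwa [if_pos hevk]
      · refine ⟨m + 1, hagree, by simp only; rw [hT1]; exact hs, ?_⟩
        change (if Even (onesBefore _ (m + 1)) then _ else _)
        rwa [if_neg hev1]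

/-- If `w` is an even maximal decoration of length `M ≥ 2`, then for every
`2 ≤ i ≤ M`, the sequence `wᵢ⋯w_M 0 1 0^∞` is `≤₁` the sequence `w₁⋯w_M 0 1 0^∞`. -/
theorem maximal_decoration_even_shift_le (w : List Bool) (hM : 2 ≤ w.length)
    (hmax : maximalDecoration w) (heven : Even (w.count true)) :
    ∀ i : ℕ, 2 ≤ i → i ≤ w.length →
      unimodalLE (wordSeq (w.drop (i - 1) ++ [false, true]) zeroSeq)
        (wordSeq (w ++ [false, true]) zeroSeq) := by
  intro i hi hiM
  right
  rw [wordSeq_drop _ _ _ _ (by omega)]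
  refine shift_le_of_maximal _ (fun b => periodicSeq (w ++ [b])) w.length (i - 1) (by omega)
    (by omega) (fun b n hn => periodicSeq_lt w b _ _ n hn) (periodicSeq_length w) ?_ ?_ ?_ ?_
  · simp [wordSeq]
  · simp [wordSeq]
  · intro n hn
    have : ¬ n < w.length + 2 := by omega
    simp [wordSeq, zeroSeq, this]
  · rintro (_ | _)
    · exact hmax.1 _ (by omega)
    · exact hmax.2 _ (by omega)
end

section
/- Let w = w₁⋯w_M (with M ≥ 2) be a finite binary word which is a maximal decoration and which is odd. Then for every i with 2 ≤ i ≤ M, the one-sided sequence w_i w_{i+1} ⋯ w_M 1 1 0^∞ is less than or equal to the sequence w₁ w₂ ⋯ w_M 1 1 0^∞ in the unimodal order. -/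
lemma onesBefore_of_tail_false {s : ℕ → Bool} {a k : ℕ} (hak : a ≤ k)
    (h : ∀ i, a ≤ i → i < k → s i = false) : onesBefore s k = onesBefore s a := by
  induction k, hak using Nat.le_induction with
  | base => rfl
  | succ k hk ih =>
    rw [onesBefore_succ, ih (fun i h1 h2 => h i h1 (by omega)), h k hk (by omega)]
    simp

/-- An index at which `s` and `t` first differ is the one that decides `s ≤₁ t`. -/
lemma unimodal_at_first_diff {s t : ℕ → Bool} (h : unimodalLE s t) {k : ℕ}
    (hk : ∀ i < k, t i = s i) (hne : t k ≠ s k) :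
    if Even (onesBefore t k) then t k = true else s k = true := by
  rcases h with rfl | ⟨k', h1, h2, h3⟩
  · exact absurd rfl hne
  · have : k' = k := by
      rcases lt_trichotomy k' k with h | h | h
      · exact absurd (hk _ h) h2
      · exact h
      · exact absurd (h1 _ h) hne
    subst this
    exact h3

lemma wordSeq_one_one_zero (u : List Bool) (n : ℕ) :
    wordSeq (u ++ [true, true]) zeroSeq n =
      if n < u.length then u.getD n false else decide (n ≤ u.length + 1) := by
  unfold wordSeq zeroSeq
  by_cases h : n < u.length
  · simp [h, show n < u.length + 2 by omega]
  · obtain ⟨m, rfl⟩ := Nat.exists_eq_add_of_le (not_lt.mp h)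
    rcases m with _ | _ | m
    · simp
    · simp
    · simp

lemma periodicSeq_append (w : List Bool) (b : Bool) {n : ℕ} (hn : n ≤ w.length) :
    periodicSeq (w ++ [b]) n = if n < w.length then w.getD n false else b := by
  unfold periodicSeq
  rw [Nat.mod_eq_of_lt (by simp; omega)]
  split_ifs with h
  · simp [h, List.getElem?_append_left]
  · obtain rfl : n = w.length := by omega
    simp

/-- If `w` is an odd maximal decoration of length `M ≥ 2`, then for every
`2 ≤ i ≤ M`, the sequence `wᵢ⋯w_M 1 1 0^∞` is `≤₁` the sequence `w₁⋯w_M 1 1 0^∞`. -/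
theorem maximal_decoration_odd_shift_le (w : List Bool) (hM : 2 ≤ w.length)
    (hmax : maximalDecoration w) (hodd : Odd (w.count true)) :
    ∀ i : ℕ, 2 ≤ i → i ≤ w.length →
      unimodalLE (wordSeq (w.drop (i - 1) ++ [true, true]) zeroSeq)
        (wordSeq (w ++ [true, true]) zeroSeq) := by
  intro i hi hiM
  obtain ⟨j, rfl⟩ : ∃ j, i = j + 1 := ⟨i - 1, by omega⟩
  obtain ⟨L, hL⟩ : ∃ L, w.length = L + j := ⟨w.length - j, by omega⟩
  rw [Nat.add_sub_cancel]
  set X := wordSeq (w ++ [true, true]) zeroSeq with hX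
  set S := wordSeq (w.drop j ++ [true, true]) zeroSeq with hS
  have hXn : ∀ n, X n = if n < w.length then w.getD n false else decide (n ≤ w.length + 1) :=
    wordSeq_one_one_zero w
  have hSn : ∀ n, S n = X (n + j) := by
    intro n
    rw [hXn, hS, wordSeq_one_one_zero, List.length_drop]
    by_cases h : n < L
    · rw [if_pos (by omega), if_pos (by omega)]
      simp [List.getD_eq_getElem?_getD, List.getElem?_drop, Nat.add_comm]
    · rw [if_neg (by omega), if_neg (by omega), decide_eq_decide]
      omega
  have hP : ∀ n ≤ w.length, periodicSeq (w ++ [true]) n = X n := by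
    intro n hn
    rw [periodicSeq_append w true hn, hXn]
    split_ifs
    · rfl
    · simp; omega
  have hQ : ∀ n < w.length, periodicSeq (w ++ [false]) n = X n := by
    intro n hn
    rw [periodicSeq_append w false hn.le, hXn, if_pos hn, if_pos hn]
  have hQM : periodicSeq (w ++ [false]) (L + j) = false := by
    rw [periodicSeq_append w false (by omega), if_neg (by omega)]
  by_cases hEq : S = X
  · exact Or.inl hEq
  have hex : ∃ k, X k ≠ S k := by
    by_contra! h
    exact hEq (funext fun n => (h n).symm)
  classical
  obtain ⟨k, hne, hlt⟩ : ∃ k, X k ≠ S k ∧ ∀ n < k, X n = S n :=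
    ⟨Nat.find hex, Nat.find_spec hex, fun n hn => not_not.mp (Nat.find_min hex hn)⟩
  refine Or.inr ⟨k, hlt, hne, ?_⟩
  change if Even (onesBefore X k) then X k = true else S k = true
  rcases le_or_gt k L with hkL | hkL
  · have key := unimodal_at_first_diff (hmax.2 j (by omega)) (k := k)
      (fun n hn => by
        rw [hP n (by omega), hP (n + j) (by omega), ← hSn, hlt n hn])
      (by rw [hP k (by omega), hP (k + j) (by omega), ← hSn]; exact hne)
    rw [onesBefore_congr (t := X) (fun n hn => hP n (by omega)), hP k (by omega),
      hP (k + j) (by omega), ← hSn] at key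
    exact key
  · have hSL : S L = true := by
      rw [hSn, hXn, if_neg (by omega)]; simp; omega
    have hSL1 : S (L + 1) = true := by
      rw [hSn, hXn, if_neg (by omega)]; simp; omega
    have hStail : ∀ n, L + 2 ≤ n → S n = false := by
      intro n hn
      rw [hSn, hXn, if_neg (by omega)]; simp; omega
    have hXL : X L = true := by rw [hlt L hkL, hSL]
    -- The common prefix of length `L` is even, by maximality of `w0`.
    have hEven : Even (onesBefore X L) := by
      have key := unimodal_at_first_diff (hmax.1 j (by omega)) (k := L)
        (fun n hn => by
          rw [hQ n (by omega), hQ (n + j) (by omega), ← hSn, hlt n (by omega)])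
        (by rw [hQ L (by omega), hQM, hXL]; simp)
      rw [onesBefore_congr (t := X) (fun n hn => hQ n (by omega)), hQM] at key
      by_contra h
      simp [h] at key
    have hOdd : ¬ Even (onesBefore X (L + 1)) := by
      rw [onesBefore_succ, hXL, if_pos rfl, Nat.even_add_one]
      exact not_not.mpr hEven
    rcases Nat.lt_or_ge k (L + 2) with hk2 | hk2
    · obtain rfl : k = L + 1 := by omega
      rw [if_neg hOdd, hSL1]
    · have hXL1 : X (L + 1) = true := by rw [hlt (L + 1) (by omega), hSL1]
      have hEvenk : Even (onesBefore X k) := by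
        rw [onesBefore_of_tail_false hk2
            (fun n h1 h2 => by rw [hlt n h2, hStail n h1]),
          onesBefore_succ, hXL1, if_pos rfl, Nat.even_add_one]
        exact hOdd
      rw [if_pos hEvenk]
      rw [hStail k hk2] at hne
      simpa using hne
end

section
/- For every rational number q = m/n ∈ (0,1/2) in lowest terms, the NBT code c_q = s₀s₁⋯s_n is palindromic: sᵢ = s_{n−i} for every i with 0 ≤ i ≤ n. -/
/-- for `q = m/n ∈ (0,1/2)` in lowest terms, the NBT code `c_q = s₀s₁⋯s_n`
is palindromic: `sᵢ = s_{n-i}` for all `0 ≤ i ≤ n`. -/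
theorem nbt_code_palindromic (m n : ℕ) (hm : 0 < m) (hn : 2 * m < n)
    (hco : Nat.Coprime m n) :
    ∀ i ≤ n, nbtBit m n i = nbtBit m n (n - i) := by
  intro i hi
  have key : ∀ j ≤ n, nbtBit m n j = true → nbtBit m n (n - j) = true := by
    intro j hj h
    simp only [nbtBit, decide_eq_true_eq] at h ⊢
    obtain ⟨k, h1, h2⟩ := h
    have hk : (k : ℕ) ≤ m := Nat.lt_succ_iff.mp k.isLt
    -- The half-turn of the segment, `(x, y) ↦ (n - x, m - y)`, sends the line `y = k` to `y = m - k`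
    -- and the interval `(j - 1, j + 1)` to the one around `n - j`.
    refine ⟨⟨m - k, by omega⟩, ?_⟩
    push_cast [Nat.cast_sub hj, Nat.cast_sub hk]
    constructor <;> nlinarith
  rw [Bool.eq_iff_iff]
  refine ⟨key i hi, fun h => ?_⟩
  simpa [Nat.sub_sub_self hi] using key (n - i) (Nat.sub_le n i) h
end

section
/- For every rational number q = m/n ∈ (0,1/2) in lowest terms, the NBT code c_q = s₀s₁⋯s_n satisfies: s₀ = s_n = 1, s₁ = s_{n−1} = 0, and the number of indices i ∈ {0,1,…,n} with sᵢ = 1 is exactly 2m. -/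
theorem nbtBit_eq_true_iff (m n i : ℕ) :
    nbtBit m n i = true ↔ ∃ k ≤ m, m * i < k * n + m ∧ k * n < m * i + m := by
  unfold nbtBit
  rw [decide_eq_true_iff]
  constructor
  · rintro ⟨k, h1, h2⟩
    refine ⟨k, by omega, ?_, ?_⟩ <;> zify <;> linarith
  · rintro ⟨k, hk, h1, h2⟩
    refine ⟨⟨k, by omega⟩, ?_, ?_⟩ <;> zify at h1 h2 <;> simp only <;> linarith

/-- Points `j * n / m` with distinct `j` are more than `2` apart. -/
theorem two_mul_lt_gap {m n : ℕ} (hn : 2 * m < n) {j k : ℕ} (h : j < k) :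
    j * n + 2 * m < k * n := by
  have : (j + 1) * n ≤ k * n := Nat.mul_le_mul_right n h
  linarith

/-- The index `⌊(k + 1) * n / m⌋`; the shift lets `k` run over `Finset.range m`. -/
def floorIdx (m n k : ℕ) : ℕ := (k + 1) * n / m

/-- The index `⌈k * n / m⌉`. -/
def ceilIdx (m n k : ℕ) : ℕ := (k * n + (m - 1)) / m

theorem floorIdx_eq_iff {m : ℕ} (hm : 0 < m) (n k i : ℕ) :
    floorIdx m n k = i ↔ m * i ≤ (k + 1) * n ∧ (k + 1) * n < m * i + m := by
  unfold floorIdx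
  rw [Nat.div_eq_iff hm, mul_comm i m]
  omega

theorem ceilIdx_eq_iff {m : ℕ} (hm : 0 < m) (n k i : ℕ) :
    ceilIdx m n k = i ↔ k * n ≤ m * i ∧ m * i < k * n + m := by
  unfold ceilIdx
  rw [Nat.div_eq_iff hm, mul_comm i m]
  omega

theorem filter_nbtBit_eq {m n : ℕ} (hm : 0 < m) (hn : 2 * m < n) :
    (Finset.range (n + 1)).filter (fun i => nbtBit m n i = true) =
      (Finset.range m).image (floorIdx m n) ∪ (Finset.range m).image (ceilIdx m n) := by
  ext i
  simp only [Finset.mem_filter, Finset.mem_range, Finset.mem_union, Finset.mem_image,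
    nbtBit_eq_true_iff, floorIdx_eq_iff hm, ceilIdx_eq_iff hm]
  constructor
  · rintro ⟨hi, k, hk, h1, h2⟩
    rcases le_or_gt (m * i) (k * n) with h | h
    · rcases k with _ | k
      · -- `k = 0` forces `i = 0`, which is listed as a ceiling
        exact Or.inr ⟨0, hm, by simp, h1⟩
      · exact Or.inl ⟨k, by omega, h, h2⟩
    · refine Or.inr ⟨k, ?_, h.le, h1⟩
      have : m * i ≤ m * n := Nat.mul_le_mul_left m (by omega)
      exact lt_of_mul_lt_mul_right (h.trans_le this) (Nat.zero_le n)
  · rintro (⟨k, hk, h1, h2⟩ | ⟨k, hk, h1, h2⟩)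
    · have : (k + 1) * n ≤ m * n := Nat.mul_le_mul_right n hk
      have : i ≤ n := le_of_mul_le_mul_left (h1.trans this) hm
      exact ⟨by omega, k + 1, hk, by omega, h2⟩
    · have := two_mul_lt_gap hn hk
      have : i < n := lt_of_mul_lt_mul_left (show m * i < m * n by omega) (Nat.zero_le m)
      exact ⟨by omega, k, hk.le, h2, by omega⟩

theorem floorIdx_injective {m n : ℕ} (hm : 0 < m) (hn : 2 * m < n) :
    Function.Injective (floorIdx m n) := by
  intro j k h
  have hj := (floorIdx_eq_iff hm n j _).1 h
  have hk := (floorIdx_eq_iff hm n k _).1 rfl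
  rcases lt_trichotomy j k with hlt | heq | hlt
  · have := two_mul_lt_gap hn (Nat.succ_lt_succ hlt)
    simp only [Nat.succ_eq_add_one] at this
    omega
  · exact heq
  · have := two_mul_lt_gap hn (Nat.succ_lt_succ hlt)
    simp only [Nat.succ_eq_add_one] at this
    omega

theorem ceilIdx_injective {m n : ℕ} (hm : 0 < m) (hn : 2 * m < n) :
    Function.Injective (ceilIdx m n) := by
  intro j k h
  have hj := (ceilIdx_eq_iff hm n j _).1 h
  have hk := (ceilIdx_eq_iff hm n k _).1 rfl
  rcases lt_trichotomy j k with hlt | heq | hlt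
  · have := two_mul_lt_gap hn hlt
    omega
  · exact heq
  · have := two_mul_lt_gap hn hlt
    omega

/-- A floor and a ceiling can only agree for the same point `k * n / m`, which would then be an
integer; coprimality excludes this for `0 < k < m`. -/
theorem disjoint_floorIdx_ceilIdx {m n : ℕ} (hm : 0 < m) (hn : 2 * m < n)
    (hco : Nat.Coprime m n) :
    Disjoint ((Finset.range m).image (floorIdx m n)) ((Finset.range m).image (ceilIdx m n)) := by
  rw [Finset.disjoint_left]
  intro i hf hc
  simp only [Finset.mem_image, Finset.mem_range, floorIdx_eq_iff hm, ceilIdx_eq_iff hm] at hf hc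
  obtain ⟨j, hj, hj1, hj2⟩ := hf
  obtain ⟨k, hk, hk1, hk2⟩ := hc
  rcases lt_trichotomy (j + 1) k with hlt | rfl | hlt
  · have := two_mul_lt_gap hn hlt
    omega
  · have hdvd : m ∣ (j + 1) * n := ⟨i, by omega⟩
    have := Nat.le_of_dvd (Nat.succ_pos j) (hco.dvd_of_dvd_mul_right hdvd)
    omega
  · have := two_mul_lt_gap hn hlt
    omega

/-- for `q = m/n ∈ (0,1/2)` in lowest terms, the NBT code `c_q = s₀⋯s_n`
satisfies `s₀ = s_n = 1`, `s₁ = s_{n-1} = 0`, and it has exactly `2m` symbols equal to `1`. -/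
theorem nbt_code_ends_and_count (m n : ℕ) (hm : 0 < m) (hn : 2 * m < n)
    (hco : Nat.Coprime m n) :
    nbtBit m n 0 = true ∧ nbtBit m n n = true ∧
    nbtBit m n 1 = false ∧ nbtBit m n (n - 1) = false ∧
    ((Finset.range (n + 1)).filter (fun i => nbtBit m n i = true)).card = 2 * m := by
  refine ⟨?_, ?_, ?_, ?_, ?_⟩
  · rw [nbtBit_eq_true_iff]
    exact ⟨0, Nat.zero_le m, by simpa using hm, by simpa using hm⟩
  · rw [nbtBit_eq_true_iff]
    exact ⟨m, le_rfl, by omega, by omega⟩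
  · rw [Bool.eq_false_iff, Ne, nbtBit_eq_true_iff]
    rintro ⟨k, hk, h1, h2⟩
    rcases Nat.eq_zero_or_pos k with rfl | hpos
    · simp at h1
    · have := two_mul_lt_gap hn hpos
      omega
  · rw [Bool.eq_false_iff, Ne, nbtBit_eq_true_iff]
    rintro ⟨k, hk, h1, h2⟩
    have hs : m * (n - 1) + m = m * n := by
      rw [← Nat.mul_succ, Nat.succ_eq_add_one, Nat.sub_add_cancel (by omega)]
    rcases hk.eq_or_lt with rfl | hlt
    · omega
    · have := two_mul_lt_gap hn hlt
      omega
  · rw [filter_nbtBit_eq hm hn,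
      Finset.card_union_of_disjoint (disjoint_floorIdx_ceilIdx hm hn hco),
      Finset.card_image_of_injective _ (floorIdx_injective hm hn),
      Finset.card_image_of_injective _ (ceilIdx_injective hm hn), Finset.card_range]
    omega
end

section
/- For all rational numbers q, q' ∈ (0,1/2): q ≤ q' if and only if the periodic sequence (c_{q'} 0)^∞ is less than or equal to the periodic sequence (c_q 0)^∞ in the unimodal order. In particular, for NBT codes the unimodal order of the periodic codes reverses the order of the rationals. -/
/-- The integer part of the abscissa `k n / m` at which the segment from `(0,0)` to `(n,m)` meets
the line `y = k`. -/
def crossing (m n k : ℕ) : ℕ := k * n / m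

theorem nbtBit_true_iff (m n i : ℕ) :
    nbtBit m n i = true ↔ ∃ k ≤ m, i * m < k * n + m ∧ k * n < i * m + m := by
  unfold nbtBit
  rw [decide_eq_true_iff]
  constructor
  · rintro ⟨⟨k, hk⟩, h1, h2⟩
    refine ⟨k, by omega, ?_, ?_⟩
    · zify; simp only at h1; linarith
    · zify; simp only at h2; linarith
  · rintro ⟨k, hk, h1, h2⟩
    refine ⟨⟨k, by omega⟩, ?_, ?_⟩
    · zify at h1; simp only; linarith
    · zify at h2; simp only; linarith

theorem crossing_mul_le (m n k : ℕ) : crossing m n k * m ≤ k * n := Nat.div_mul_le_self _ _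

theorem lt_crossing_mul {m : ℕ} (hm : 0 < m) (n k : ℕ) : k * n < crossing m n k * m + m := by
  have := Nat.lt_div_mul_add (a := k * n) hm
  exact this

/-- By coprimality the segment meets `y = k` at a lattice point only for `k = 0` and `k = m`. -/
theorem crossing_mul_lt {m n k : ℕ} (hc : Nat.Coprime m n) (hk0 : 0 < k) (hkm : k < m) :
    crossing m n k * m < k * n := by
  refine lt_of_le_of_ne (crossing_mul_le m n k) fun h => ?_
  have hd : m ∣ k * n := ⟨crossing m n k, by rw [← h, mul_comm]⟩
  have := Nat.le_of_dvd hk0 (hc.dvd_of_dvd_mul_right hd)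
  omega

theorem crossing_zero (m n : ℕ) : crossing m n 0 = 0 := by simp [crossing]

theorem crossing_self {m : ℕ} (hm : 0 < m) (n : ℕ) : crossing m n m = n := by
  simp [crossing, hm]

/-- Consecutive crossings are at least two apart, so the pairs `11` do not overlap. -/
theorem crossing_add_two_le {m n : ℕ} (hm : 0 < m) (hmn : 2 * m < n) (k : ℕ) :
    crossing m n k + 2 ≤ crossing m n (k + 1) := by
  have h := crossing_mul_le m n k
  unfold crossing at *
  rw [Nat.le_div_iff_mul_le hm]
  nlinarith

theorem crossing_mono {m n j k : ℕ} (h : j ≤ k) : crossing m n j ≤ crossing m n k :=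
  Nat.div_le_div_right (Nat.mul_le_mul_right _ h)

theorem crossing_add_two_le_of_lt {m n j k : ℕ} (hm : 0 < m) (hmn : 2 * m < n) (h : j < k) :
    crossing m n j + 2 ≤ crossing m n k :=
  (crossing_add_two_le hm hmn j).trans (crossing_mono h)

theorem nbtBit_crossing {m n k : ℕ} (hm : 0 < m) (hk : k ≤ m) :
    nbtBit m n (crossing m n k) = true := by
  rw [nbtBit_true_iff]
  have h1 := crossing_mul_le m n k
  exact ⟨k, hk, by omega, lt_crossing_mul hm n k⟩

theorem nbtBit_crossing_succ {m n k : ℕ} (hm : 0 < m) (hc : Nat.Coprime m n) (hk0 : 0 < k)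
    (hk : k < m) : nbtBit m n (crossing m n k + 1) = true := by
  rw [nbtBit_true_iff]
  have h1 := crossing_mul_lt hc hk0 hk
  have h2 := lt_crossing_mul hm n k
  exact ⟨k, hk.le, by rw [add_mul]; omega, by rw [add_mul]; omega⟩

/-- The positions of the `1`s before the `k`-th crossing. -/
theorem nbtBit_iff {m n k i : ℕ} (hm : 0 < m) (hc : Nat.Coprime m n) (hk : k ≤ m)
    (hi : i < crossing m n k) :
    nbtBit m n i = true ↔
      i = 0 ∨ ∃ j, 0 < j ∧ j < k ∧ (i = crossing m n j ∨ i = crossing m n j + 1) := by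
  constructor
  · rw [nbtBit_true_iff]
    rintro ⟨j, -, h1, h2⟩
    have hjk : j < k := by
      by_contra hge
      have h3 : k * n ≤ j * n := Nat.mul_le_mul_right _ (by omega)
      have h4 := crossing_mul_le m n k
      have h5 : (i + 1) * m ≤ crossing m n k * m := Nat.mul_le_mul_right _ hi
      rw [add_mul] at h5
      omega
    rcases Nat.eq_zero_or_pos j with rfl | hj
    · left
      by_contra h0
      have : 1 * m ≤ i * m := Nat.mul_le_mul_right _ (by omega)
      omega
    · right
      refine ⟨j, hj, hjk, ?_⟩
      have h3 := crossing_mul_le m n j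
      have h4 := lt_crossing_mul hm n j
      have h5 : crossing m n j < i + 1 :=
        Nat.lt_of_mul_lt_mul_right (a := m) (by rw [add_mul]; omega)
      have h6 : i < crossing m n j + 2 :=
        Nat.lt_of_mul_lt_mul_right (a := m) (by rw [add_mul]; omega)
      omega
  · rintro (rfl | ⟨j, hj0, hjk, rfl | rfl⟩)
    · rw [nbtBit_true_iff]
      exact ⟨0, by omega, by omega, by omega⟩
    · exact nbtBit_crossing hm (by omega)
    · exact nbtBit_crossing_succ hm hc hj0 (by omega)

/-- The letter `0` appended to the NBT code is also the value of `nbtBit` at position `n + 1`. -/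
theorem nbtBit_succ_den (m n : ℕ) : nbtBit m n (n + 1) = false := by
  rw [← Bool.not_eq_true, nbtBit_true_iff]
  rintro ⟨k, hk, h1, -⟩
  have : k * n ≤ m * n := Nat.mul_le_mul_right _ hk
  rw [add_mul, mul_comm n m] at h1
  omega

theorem count_eq_of_false {s : ℕ → Bool} {a b : ℕ} (hab : a ≤ b)
    (h : ∀ i, a ≤ i → i < b → s i = false) :
    ((Finset.range b).filter (fun i => s i = true)).card =
      ((Finset.range a).filter (fun i => s i = true)).card := by
  congr 1
  ext i
  simp only [Finset.mem_filter, Finset.mem_range]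
  constructor
  · rintro ⟨h1, h2⟩
    refine ⟨?_, h2⟩
    by_contra h3
    simp [h i (by omega) h1] at h2
  · rintro ⟨h1, h2⟩
    exact ⟨by omega, h2⟩

theorem count_succ_of_true {s : ℕ → Bool} {a : ℕ} (h : s a = true) :
    ((Finset.range (a + 1)).filter (fun i => s i = true)).card =
      ((Finset.range a).filter (fun i => s i = true)).card + 1 := by
  rw [Finset.range_add_one, Finset.filter_insert, if_pos h, Finset.card_insert_of_notMem (by simp)]

theorem odd_count {m n : ℕ} (hm : 0 < m) (hmn : 2 * m < n) (hc : Nat.Coprime m n) (k : ℕ)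
    (hk : k + 1 ≤ m) :
    Odd (((Finset.range (crossing m n (k + 1))).filter (fun i => nbtBit m n i = true)).card) := by
  have hgap := crossing_add_two_le hm hmn k
  induction k with
  | zero =>
    rw [count_eq_of_false (a := 1) (by omega), count_succ_of_true (a := 0)]
    · simp
    · rw [nbtBit_iff hm hc hk (by omega)]; simp
    · intro i h1 h2
      rw [← Bool.not_eq_true, nbtBit_iff hm hc hk h2]
      rintro (h | ⟨j, h⟩) <;> omega
  | succ k ih =>
    rw [count_eq_of_false hgap, count_succ_of_true (a := crossing m n (k + 1) + 1),
      count_succ_of_true]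
    · have := ih (by omega) (crossing_add_two_le hm hmn k)
      rw [add_assoc]
      exact this.add_even (by decide)
    · exact nbtBit_crossing hm (by omega)
    · exact nbtBit_crossing_succ hm hc (by omega) (by omega)
    · intro i h1 h2
      rw [← Bool.not_eq_true, nbtBit_iff hm hc hk h2]
      rintro (h | ⟨j, h3, h4, h5⟩)
      · omega
      · have := crossing_mono (m := m) (n := n) (show j ≤ k + 1 by omega)
        omega

theorem periodicSeq_nbtCode {m n i : ℕ} (hi : i < n + 2) :
    periodicSeq (nbtCode m n ++ [false]) i = nbtBit m n i := by
  have hl : (nbtCode m n ++ [false]).length = n + 2 := by simp [nbtCode]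
  unfold periodicSeq
  rw [hl, Nat.mod_eq_of_lt hi]
  rcases Nat.lt_succ_iff_lt_or_eq.mp hi with h | rfl
  · rw [List.getD_append _ _ _ _ (by simpa [nbtCode] using h)]
    rw [nbtCode, List.getD_eq_getElem?_getD, List.getElem?_ofFn, dif_pos h, Option.getD_some]
  · rw [nbtBit_succ_den, List.getD_append_right _ _ _ _ (by simp [nbtCode])]
    simp [nbtCode]

/-- If the earlier crossings coincide, the two codes agree up to the `k`-th crossing of either. -/
theorem nbtBit_agree {m n m' n' k i : ℕ} (hm : 0 < m) (hc : Nat.Coprime m n) (hm' : 0 < m')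
    (hc' : Nat.Coprime m' n') (hk : k ≤ m) (hk' : k ≤ m')
    (h : ∀ j < k, crossing m n j = crossing m' n' j)
    (hi : i < crossing m n k) (hi' : i < crossing m' n' k) : nbtBit m n i = nbtBit m' n' i := by
  rw [Bool.eq_iff_iff, nbtBit_iff hm hc hk hi, nbtBit_iff hm' hc' hk' hi']
  refine or_congr_right (exists_congr fun j => and_congr_right fun _ => and_congr_right fun hj => ?_)
  rw [h j hj]

theorem unimodalGT_of_lt {m n m' n' : ℕ} (hm : 0 < m) (hmn : 2 * m < n) (hc : Nat.Coprime m n)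
    (hm' : 0 < m') (hmn' : 2 * m' < n') (hc' : Nat.Coprime m' n') (hlt : m * n' < m' * n) :
    unimodalGT (periodicSeq (nbtCode m n ++ [false])) (periodicSeq (nbtCode m' n' ++ [false])) := by
  -- It suffices to compare the bits at a first difference inside both first periods.
  suffices H : ∃ d, d < n + 2 ∧ d < n' + 2 ∧ (∀ i < d, nbtBit m n i = nbtBit m' n' i) ∧
      nbtBit m n d ≠ nbtBit m' n' d ∧
      (if Even (((Finset.range d).filter (fun i => nbtBit m n i = true)).card)
        then nbtBit m n d = true else nbtBit m' n' d = true) by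
    obtain ⟨d, h1, h2, h3, h4, h5⟩ := H
    refine ⟨d, fun i hi => ?_, ?_, ?_⟩
    · rw [periodicSeq_nbtCode (by omega), periodicSeq_nbtCode (by omega), h3 i hi]
    · rwa [periodicSeq_nbtCode h1, periodicSeq_nbtCode h2]
    · rw [periodicSeq_nbtCode h1, periodicSeq_nbtCode h2, Finset.filter_congr
        (q := fun i => nbtBit m n i = true) fun i hi => by
          rw [periodicSeq_nbtCode (by have := Finset.mem_range.mp hi; omega)]]
      exact h5
  have hle : ∀ k, crossing m' n' k ≤ crossing m n k := by
    intro k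
    have h1 := crossing_mul_le m' n' k
    unfold crossing at *
    rw [Nat.le_div_iff_mul_le hm]
    refine Nat.le_of_mul_le_mul_right (c := m') ?_ hm'
    calc k * n' / m' * m * m' = (k * n' / m' * m') * m := by ring
      _ ≤ k * n' * m := Nat.mul_le_mul_right _ h1
      _ = k * (m * n') := by ring
      _ ≤ k * (m' * n) := Nat.mul_le_mul_left _ hlt.le
      _ = k * n * m' := by ring
  by_cases hex : ∃ k, k ≤ m ∧ k ≤ m' ∧ crossing m n k ≠ crossing m' n' k
  · classical
    obtain ⟨hk, hk', hne⟩ := Nat.find_spec hex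
    have hmin : ∀ j < Nat.find hex, crossing m n j = crossing m' n' j := by
      intro j hj
      by_contra h
      exact Nat.find_min hex hj ⟨by omega, by omega, h⟩
    generalize Nat.find hex = k at *
    rcases k with _ | k
    · simp [crossing_zero] at hne
    have hltc : crossing m' n' (k + 1) < crossing m n (k + 1) := by
      have := hle (k + 1); omega
    have hgap := crossing_add_two_le hm' hmn' k
    have hagree : ∀ i < crossing m' n' (k + 1), nbtBit m n i = nbtBit m' n' i := fun i hi =>
      nbtBit_agree hm hc hm' hc' hk hk' hmin (by omega) hi
    have ht : nbtBit m' n' (crossing m' n' (k + 1)) = true := nbtBit_crossing hm' hk'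
    have hf : nbtBit m n (crossing m' n' (k + 1)) = false := by
      rw [← Bool.not_eq_true, nbtBit_iff hm hc hk hltc]
      rintro (h | ⟨j, -, h4, h5⟩)
      · omega
      · have := crossing_mono (m := m') (n := n') (show j ≤ k by omega)
        rw [hmin j h4] at h5
        omega
    have hb := crossing_mono (m := m) (n := n) hk
    have hb' := crossing_mono (m := m') (n := n') hk'
    rw [crossing_self hm] at hb
    rw [crossing_self hm'] at hb'
    refine ⟨crossing m' n' (k + 1), by omega, by omega, hagree, by simp [ht, hf], ?_⟩
    rw [if_neg, ht]
    rw [Nat.not_even_iff_odd, Finset.filter_congr (q := fun i => nbtBit m' n' i = true)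
      fun i hi => by rw [hagree i (Finset.mem_range.mp hi)]]
    exact odd_count hm' hmn' hc' k hk'
  · push Not at hex
    have hmm : m' < m := by
      by_contra hge
      -- Otherwise the crossings for `k = m` agree, but the one for `m'/n'` lies strictly before `n`.
      have h1 := hex m le_rfl (by omega)
      rw [crossing_self hm] at h1
      have h2 := crossing_mul_le m' n' m
      rw [← h1, mul_comm n] at h2
      omega
    have hd := hex m' hmm.le le_rfl
    have hgap := crossing_add_two_le_of_lt hm hmn hmm
    rw [crossing_self hm] at hgap
    have hself := crossing_self hm' n'
    have hagree : ∀ i < crossing m n m', nbtBit m n i = nbtBit m' n' i := fun i hi =>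
      nbtBit_agree hm hc hm' hc' hmm.le le_rfl (fun j hj => hex j (by omega) hj.le) hi (by omega)
    have ht0 : nbtBit m n (crossing m n m') = true := nbtBit_crossing hm hmm.le
    have ht0' : nbtBit m' n' (crossing m' n' m') = true := nbtBit_crossing hm' le_rfl
    have ht : nbtBit m n (crossing m n m' + 1) = true := nbtBit_crossing_succ hm hc hm' hmm
    have hf : nbtBit m' n' (crossing m n m' + 1) = false := by
      rw [hd, hself]; exact nbtBit_succ_den _ _
    refine ⟨crossing m n m' + 1, by omega, by omega, fun i hi => ?_, by simp [ht, hf], ?_⟩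
    · rcases Nat.lt_succ_iff_lt_or_eq.mp hi with h | rfl
      · exact hagree i h
      · rw [ht0, hd, ht0']
    · rw [if_pos, ht]
      rw [count_succ_of_true (s := nbtBit m n) ht0]
      obtain ⟨k, rfl⟩ := Nat.exists_eq_succ_of_ne_zero hm'.ne'
      exact (odd_count hm hmn hc k hmm.le).add_one

theorem unimodalGT_asymm {s t : ℕ → Bool} (h : unimodalGT s t) (h' : unimodalGT t s) : False := by
  obtain ⟨k, h1, h2, h3⟩ := h
  obtain ⟨l, h1', h2', h3'⟩ := h'
  obtain rfl : k = l := by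
    rcases lt_trichotomy k l with h | h | h
    · exact absurd (h1' k h).symm h2
    · exact h
    · exact absurd (h1 l h).symm h2'
  rw [Finset.filter_congr (q := fun i => s i = true)
    fun i hi => by rw [h1' i (Finset.mem_range.mp hi)]] at h3'
  split_ifs at h3 h3' <;> simp_all

theorem unimodalGT_nbtCodeQ {q q' : ℚ} (hq0 : 0 < q) (hq'1 : q' < 1 / 2) (h : q < q') :
    unimodalGT (periodicSeq (nbtCodeQ q ++ [false])) (periodicSeq (nbtCodeQ q' ++ [false])) := by
  have key : ∀ r : ℚ, 0 < r → r < 1 / 2 →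
      0 < r.num.toNat ∧ 2 * r.num.toNat < r.den ∧ Nat.Coprime r.num.toNat r.den ∧
        (r.num.toNat : ℤ) = r.num := by
    intro r h0 h1
    have hn : 0 < r.num := Rat.num_pos.mpr h0
    have h2 : r.num * 2 < r.den := by
      have := Rat.lt_iff r (1 / 2) |>.mp h1
      norm_num at this
      exact this
    refine ⟨by omega, by omega, ?_, by omega⟩
    have := r.reduced
    rwa [show r.num.natAbs = r.num.toNat by omega] at this
  obtain ⟨h1, h2, h3, h4⟩ := key q hq0 (h.trans hq'1)
  obtain ⟨h1', h2', h3', h4'⟩ := key q' (hq0.trans h) hq'1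
  refine unimodalGT_of_lt h1 h2 h3 h1' h2' h3' ?_
  have hlt := (Rat.lt_iff q q').mp h
  rw [← h4, ← h4'] at hlt
  exact_mod_cast hlt

/-- for `q, q' ∈ (0,1/2)` rational, `q ≤ q'` iff `(c_{q'}0)^∞ ≤₁ (c_q 0)^∞`. -/
theorem nbt_periodic_code_order (q q' : ℚ) (hq0 : 0 < q) (hq1 : q < 1 / 2)
    (hq'0 : 0 < q') (hq'1 : q' < 1 / 2) :
    q ≤ q' ↔
      unimodalLE (periodicSeq (nbtCodeQ q' ++ [false]))
        (periodicSeq (nbtCodeQ q ++ [false])) := by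
  constructor
  · intro h
    rcases h.eq_or_lt with rfl | h
    · exact Or.inl rfl
    · exact Or.inr (unimodalGT_nbtCodeQ hq0 hq'1 h)
  · intro h
    by_contra! hlt
    have hgt := unimodalGT_nbtCodeQ hq'0 hq1 hlt
    rcases h with h | h
    · rw [h] at hgt
      exact unimodalGT_asymm hgt hgt
    · exact unimodalGT_asymm hgt h
end

section
/- For every rational number q ∈ (0,1/2), both words c_q 0 and c_q 1 are maximal codes; that is, σ^i((c_q 0)^∞) ≤₁ (c_q 0)^∞ and σ^i((c_q 1)^∞) ≤₁ (c_q 1)^∞ in the unimodal order, for every i ≥ 1. -/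
/-! ### Parities and the unimodal order -/

/-- The parity of the number of ones among the first `k` symbols of `s`; `true` means odd. -/
def onesParity (s : ℕ → Bool) : ℕ → Bool
  | 0 => false
  | k + 1 => xor (onesParity s k) (s k)

lemma onesParity_eq (s : ℕ → Bool) (k : ℕ) :
    onesParity s k = decide (¬ Even (((Finset.range k).filter (fun i => s i = true)).card)) := by
  induction k with
  | zero => simp [onesParity]
  | succ k ih =>
    rw [onesParity, ih, Finset.range_add_one, Finset.filter_insert]
    cases h : s k <;> simp [Nat.even_add_one, -Nat.not_even_iff_odd]

lemma symbol_eq_xor (s : ℕ → Bool) (k : ℕ) :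
    s k = xor (onesParity s k) (onesParity s (k + 1)) := by
  simp [onesParity]

/-- `s >₁ σ^i s`, expressed by the prefix parities `T` of `s`: the sequence
`j ↦ T (i + j) + T i` of prefix parities of `σ^i s` is lexicographically smaller than `T`. -/
lemma gt_of_parity (s : ℕ → Bool) (i : ℕ)
    (h : ∃ k, onesParity s k = true ∧ xor (onesParity s (i + k)) (onesParity s i) = false ∧
      ∀ j < k, onesParity s j = xor (onesParity s (i + j)) (onesParity s i)) :
    unimodalGT s (fun n => s (n + i)) := by
  obtain ⟨k, h1, h2, h3⟩ := h
  cases k with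
  | zero => simp [onesParity] at h1
  | succ k =>
    refine ⟨k, ?_, ?_, ?_⟩
    · intro j hj
      have a1 := h3 j (by omega)
      have a2 := h3 (j + 1) (by omega)
      have e1 := symbol_eq_xor s j
      have e2 := symbol_eq_xor s (i + j)
      rw [← add_assoc] at a2
      show s j = s (j + i)
      rw [add_comm j i, e1, e2, a1, a2]
      cases onesParity s (i + j) <;> cases onesParity s i <;>
        cases onesParity s (i + j + 1) <;> rfl
    all_goals
      have a1 := h3 k (by omega)
      have e1 := symbol_eq_xor s k
      have e2 := symbol_eq_xor s (i + k)
      rw [← add_assoc] at h2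
      have hP := onesParity_eq s k
      simp only [add_comm k i]
      rw [h1] at e1
    · rw [e1, e2, a1]
      revert h2
      cases onesParity s (i + k) <;> cases onesParity s i <;>
        cases onesParity s (i + k + 1) <;> simp
    · split_ifs with hE
      · rw [e1, hP]; simp [hE]
      · simp only [hE, not_false_eq_true, decide_true] at hP
        rw [hP] at a1
        rw [e2]
        revert h2 a1
        cases onesParity s (i + k) <;> cases onesParity s i <;>
          cases onesParity s (i + k + 1) <;> simp

/-! ### The rotation orbit -/

/-- The orbit of `n` under the rotation `x ↦ x - m` modulo `n`, with representatives in `[0, n)`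
except for the starting value `n` itself. -/
def rot (m n : ℕ) : ℕ → ℕ
  | 0 => n
  | j + 1 => if rot m n j < m then rot m n j + n - m else rot m n j - m

/-- For `j ≥ 1`, `rot m n j` is the residue of `-j m` in `[0, n)`, and the quotient `k` is the
height of the first horizontal line met by the segment at or after abscissa `j`. -/
lemma rot_spec (m n : ℕ) (hm : 0 < m) (hn : 2 * m < n) (j : ℕ) :
    (∃ k, 1 ≤ k ∧ k * n = rot m n j + j * m) ∧ rot m n j ≤ n ∧ (1 ≤ j → rot m n j < n) := by
  induction j with
  | zero => exact ⟨⟨1, by simp [rot]⟩, by simp [rot], by omega⟩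
  | succ j ih =>
    obtain ⟨⟨k, hk, hkn⟩, h1, h2⟩ := ih
    rw [rot]
    split_ifs with h
    · refine ⟨⟨k + 1, by omega, ?_⟩, by omega, by omega⟩
      rw [add_mul, add_mul, hkn]; omega
    · refine ⟨⟨k, hk, ?_⟩, by omega, by omega⟩
      rw [add_mul, hkn]; omega

lemma rot_end (m n : ℕ) (hm : 0 < m) (hn : 2 * m < n) : rot m n n = 0 := by
  obtain ⟨⟨k, -, h⟩, -, h2⟩ := rot_spec m n hm hn n
  have hlt := h2 (by omega)
  have hd : n ∣ rot m n n := by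
    rw [← Nat.dvd_add_left (Dvd.intro m rfl : n ∣ n * m), ← h]
    exact Dvd.intro_left k rfl
  exact Nat.eq_zero_of_dvd_of_lt hd hlt

lemma rot_pos (m n : ℕ) (hm : 0 < m) (hn : 2 * m < n) (hc : Nat.Coprime m n) (j : ℕ)
    (hj : j < n) : 0 < rot m n j := by
  rcases Nat.eq_zero_or_pos j with rfl | hj0
  · simp only [rot]; omega
  obtain ⟨⟨k, -, h⟩, -, -⟩ := rot_spec m n hm hn j
  by_contra h0
  have h0 : rot m n j = 0 := by omega
  rw [h0, zero_add] at h
  have hd : n ∣ j := hc.symm.dvd_of_dvd_mul_right (h ▸ Dvd.intro_left k rfl)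
  have := Nat.le_of_dvd hj0 hd
  omega

/-! ### Parities of the NBT code -/

lemma nbtBit_zero (m n : ℕ) (hm : 0 < m) : nbtBit m n 0 = true := by
  simp only [nbtBit, decide_eq_true_eq]
  exact ⟨0, by simp; omega⟩

lemma nbtBit_succ (m n : ℕ) (hm : 0 < m) (hn : 2 * m < n) (hc : Nat.Coprime m n) (j : ℕ)
    (hj : j < n) :
    nbtBit m n (j + 1) = xor (decide (m ≤ rot m n j)) (decide (m ≤ rot m n (j + 1))) := by
  obtain ⟨⟨k, hk, hkn⟩, h1, -⟩ := rot_spec m n hm hn j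
  have hpos := rot_pos m n hm hn hc j hj
  have hkz : (k : ℤ) * n = rot m n j + m * j := by
    rw [mul_comm (m : ℤ)]; exact_mod_cast hkn
  have hiff : nbtBit m n (j + 1) = decide (rot m n j < 2 * m) := by
    simp only [nbtBit, decide_eq_decide]
    push_cast
    constructor
    · rintro ⟨⟨k', hk'⟩, ha, hb⟩
      by_contra hcon
      simp only at ha hb
      -- the interval `(j m, (j + 2) m)` is contained in `((k - 1) n, k n)`, so it contains no
      -- multiple of `n`
      have c1 : (k' : ℤ) < k := by
        by_contra hx
        have : (k : ℤ) * n ≤ k' * n := by gcongr; omega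
        have : (2 * m : ℤ) ≤ rot m n j := by omega
        nlinarith
      have c2 : ((k' : ℤ) + 1) * n ≤ k * n := by gcongr; omega
      have : (rot m n j : ℤ) ≤ n := by exact_mod_cast h1
      nlinarith
    · intro hlt
      have hlt' : (rot m n j : ℤ) < 2 * m := by exact_mod_cast hlt
      have hpos' : (0 : ℤ) < rot m n j := by exact_mod_cast hpos
      have hkm : k < m + 1 := by
        by_contra hx
        have e1 : (m + 1) * n ≤ k * n := by gcongr; omega
        have e2 : (j + 1) * m ≤ n * m := by gcongr; omega
        nlinarith
      refine ⟨⟨k, hkm⟩, ?_, ?_⟩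
      · show (m : ℤ) * (j + 1 - 1) < k * n
        nlinarith
      · show (k : ℤ) * n < m * (j + 1 + 1)
        nlinarith
  rw [hiff, rot]
  split_ifs with h
  · have a1 : rot m n j < 2 * m := by omega
    have a2 : ¬ m ≤ rot m n j := by omega
    have a3 : m ≤ rot m n j + n - m := by omega
    simp [a1, a2, a3]
  · have a2 : m ≤ rot m n j := by omega
    by_cases a1 : rot m n j < 2 * m
    · have a3 : ¬ m ≤ rot m n j - m := by omega
      simp [a1, a2, a3]
    · have a3 : m ≤ rot m n j - m := by omega
      simp [a1, a2, a3]

/-- The prefix parities of a sequence starting with the NBT code of `m / n` are the coding of the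
rotation orbit `rot` by the set `[m, n]`. -/
lemma parity_nbt (m n : ℕ) (hm : 0 < m) (hn : 2 * m < n) (hc : Nat.Coprime m n) (s : ℕ → Bool)
    (hs : ∀ j ≤ n, s j = nbtBit m n j) (j : ℕ) (hj : j ≤ n) :
    onesParity s (j + 1) = decide (m ≤ rot m n j) := by
  induction j with
  | zero =>
    have : m ≤ n := by omega
    simp [onesParity, hs 0 hj, nbtBit_zero m n hm, rot, this]
  | succ j ih =>
    rw [onesParity, ih (by omega), hs _ hj, nbtBit_succ m n hm hn hc j (by omega)]
    simp

/-! ### Lexicographic comparison of shifts -/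

/-- Reading the coding of `rot` from a later start either gives a lexicographically smaller
sequence within `d + 1` symbols, or agrees that long; in the second case the orbit from the later
start is still strictly below the orbit from the beginning. -/
lemma rot_lex (m n : ℕ) (hm : 0 < m) (hn : 2 * m < n) (i : ℕ) (hi : 1 ≤ i) (d : ℕ) :
    (∃ k ≤ d, m ≤ rot m n k ∧ rot m n (i + k) < m ∧
      ∀ j < k, (m ≤ rot m n j ↔ m ≤ rot m n (i + j))) ∨
    ((∀ j ≤ d, (m ≤ rot m n j ↔ m ≤ rot m n (i + j))) ∧ rot m n (i + d) < rot m n d) := by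
  have key : ∀ d, rot m n (i + d) < rot m n d →
      (∀ j < d, (m ≤ rot m n j ↔ m ≤ rot m n (i + j))) →
      (∃ k ≤ d, m ≤ rot m n k ∧ rot m n (i + k) < m ∧
        ∀ j < k, (m ≤ rot m n j ↔ m ≤ rot m n (i + j))) ∨
      ((∀ j ≤ d, (m ≤ rot m n j ↔ m ≤ rot m n (i + j))) ∧ rot m n (i + d) < rot m n d) := by
    intro d hlt hag
    by_cases h : m ≤ rot m n d ∧ rot m n (i + d) < m
    · exact Or.inl ⟨d, le_rfl, h.1, h.2, hag⟩
    · refine Or.inr ⟨fun j hj => ?_, hlt⟩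
      rcases Nat.lt_or_eq_of_le hj with h' | rfl
      · exact hag j h'
      · omega
  induction d with
  | zero =>
    apply key
    · have := (rot_spec m n hm hn i).2.2 hi
      simpa [rot] using this
    · intro j hj; omega
  | succ d ih =>
    rcases ih with ⟨k, hk, h⟩ | ⟨hag, hlt⟩
    · exact Or.inl ⟨k, by omega, h⟩
    · apply key
      · have := hag d le_rfl
        rw [← add_assoc, rot, rot]
        split_ifs <;> omega
      · intro j hj
        exact hag j (by omega)

lemma rot_after_small (m n : ℕ) (hn : 2 * m < n) (j : ℕ) (h : rot m n j < m) :
    m ≤ rot m n (j + 1) := by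
  rw [rot, if_pos h]; omega

/-- The lexicographic comparison of parities for the sequence `(c b)^∞`, where `c` is the NBT code
of `m / n`, and a shift by less than the period `n + 2`. Only the values of the prefix parities
`T` up to index `n + 4` enter. -/
lemma exists_parity_gap (m n : ℕ) (hm : 0 < m) (hn : 2 * m < n) (b : Bool) (T : ℕ → Bool)
    (hT0 : T 0 = false) (hT : ∀ j ≤ n, T (j + 1) = decide (m ≤ rot m n j))
    (hT2 : T (n + 2) = b) (hT3 : T (n + 3) = xor b (T 1)) (hT4 : T (n + 4) = xor b (T 2))
    (i : ℕ) (hi : 1 ≤ i) (hin : i ≤ n + 1) :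
    ∃ k, T k = true ∧ xor (T (i + k)) (T i) = false ∧ ∀ j < k, T j = xor (T (i + j)) (T i) := by
  have r0 : rot m n 0 = n := rfl
  have r1 : rot m n 1 = n - m := by
    rw [rot, r0, if_neg (by omega)]
  have t1 : T 1 = true := by
    rw [hT 0 (by omega), r0]; simp; omega
  have t2 : T 2 = true := by
    rw [hT 1 (by omega), r1]; simp; omega
  have rn := rot_end m n hm hn
  have tn1 : T (n + 1) = false := by
    rw [hT n le_rfl, rn]; simp; omega
  rw [t1] at hT3
  rw [t2] at hT4
  have next : ∀ j < n, T (j + 1) = false → T (j + 2) = true := by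
    intro j hj h
    rw [hT j hj.le] at h
    rw [hT (j + 1) hj]
    simp only [decide_eq_false_iff_not, not_le] at h
    simpa using rot_after_small m n hn j h
  cases hTi : T i with
  | true =>
    by_cases c1 : T (i + 1) = true
    · refine ⟨1, t1, by simp [c1], ?_⟩
      intro j hj
      obtain rfl : j = 0 := by omega
      simp [hT0, hTi]
    · have c1 : T (i + 1) = false := by simpa using c1
      have hi' : i ≤ n := by
        by_contra hx
        obtain rfl : i = n + 1 := by omega
        simp [tn1] at hTi
      by_cases c2 : T (i + 2) = true
      · refine ⟨2, t2, by simp [c2], ?_⟩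
        intro j hj
        interval_cases j <;> simp [hT0, hTi, t1, c1]
      · -- two zeros in a row occur only at the end of the word, with `b = 0`
        have c2 : T (i + 2) = false := by simpa using c2
        obtain rfl : i = n := by
          by_contra hx
          have := next i (by omega) c1
          simp [this] at c2
        have hb : b = false := by rw [← hT2, c2]
        subst hb
        by_cases c3 : T 3 = true
        · refine ⟨3, c3, by simp [hT3], ?_⟩
          intro j hj
          interval_cases j <;> simp [hT0, hTi, t1, t2, c1, c2]
        · have c3 : T 3 = false := by simpa using c3
          refine ⟨4, next 2 (by omega) c3, by simp [hT4], ?_⟩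
          intro j hj
          interval_cases j <;> simp [hT0, hTi, t1, t2, c1, c2, c3, hT3]
  | false =>
    have hi3 : 3 ≤ i := by
      by_contra hx
      interval_cases i <;> simp_all
    simp only [Bool.xor_false]
    rcases Nat.lt_or_ge n i with hni | hni
    · obtain rfl : i = n + 1 := by omega
      cases b with
      | false =>
        refine ⟨1, t1, hT2, ?_⟩
        intro j hj
        obtain rfl : j = 0 := by omega
        simp [hT0, tn1]
      | true =>
        refine ⟨2, t2, by simpa using hT3, ?_⟩
        intro j hj
        interval_cases j
        · simp [hT0, tn1]
        · simp [t1, hT2]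
    · have transfer : ∀ e ≤ n - i, (∀ j < e, (m ≤ rot m n j ↔ m ≤ rot m n (i + j))) →
          ∀ j < e + 1, T j = T (i + j) := by
        intro e he hag j hj
        cases j with
        | zero => simp [hT0, hTi]
        | succ j =>
          rw [← add_assoc, hT j (by omega), hT (i + j) (by omega)]
          simpa using hag j (by omega)
      rcases rot_lex m n hm hn i hi (n - i) with ⟨k, hk, ha, hb, hag⟩ | ⟨hag, hlt⟩
      · refine ⟨k + 1, ?_, ?_, transfer k hk hag⟩
        · rw [hT k (by omega)]; simpa using ha
        · rw [← add_assoc, hT (i + k) (by omega)]; simpa using hb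
      · -- agreement up to the end of the word, which forces a zero of `T` at `n - i + 1`
        obtain ⟨d, rfl⟩ : ∃ d, n = i + d := ⟨n - i, by omega⟩
        rw [Nat.add_sub_cancel_left] at hag hlt transfer
        have agr : ∀ j < d + 2, T j = T (i + j) := by
          intro j hj
          rcases Nat.lt_or_ge j (d + 1) with h | h
          · exact transfer d le_rfl (fun j hj => hag j (by omega)) j h
          · obtain rfl : j = d + 1 := by omega
            rw [← add_assoc, hT d (by omega), hT (i + d) le_rfl]
            simpa using hag d le_rfl
        have z1 : T (d + 1) = false := by rw [agr _ (by omega), ← add_assoc, tn1]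
        have z2 : T (d + 2) = true := next d (by omega) z1
        cases b with
        | false => exact ⟨d + 2, z2, hT2, agr⟩
        | true =>
          have agr3 : ∀ j < d + 3, T j = T (i + j) := by
            intro j hj
            rcases Nat.lt_or_ge j (d + 2) with h | h
            · exact agr j h
            · obtain rfl : j = d + 2 := by omega
              rw [z2, ← add_assoc, hT2]
          by_cases z3 : T (d + 3) = true
          · exact ⟨d + 3, z3, by simpa [← add_assoc] using hT3, agr3⟩
          · have z3 : T (d + 3) = false := by simpa using z3
            refine ⟨d + 4, next (d + 2) (by omega) z3, by simpa [← add_assoc] using hT4, ?_⟩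
            intro j hj
            rcases Nat.lt_or_ge j (d + 3) with h | h
            · exact agr3 j h
            · obtain rfl : j = d + 3 := by omega
              rw [z3, ← add_assoc, hT3]; rfl

/-! ### Periodic sequences of NBT codes with an extra symbol -/

lemma periodicSeq_nbt (m n : ℕ) (b : Bool) (j : ℕ) :
    periodicSeq (nbtCode m n ++ [b]) j =
      if j % (n + 2) ≤ n then nbtBit m n (j % (n + 2)) else b := by
  have hlen : (nbtCode m n ++ [b]).length = n + 2 := by simp [nbtCode]
  have hlt := Nat.mod_lt j (show 0 < n + 2 by omega)
  rw [periodicSeq, hlen]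
  split_ifs with h
  · rw [List.getD_append _ _ _ _ (by simp [nbtCode]; omega)]
    simp [nbtCode, List.getD_eq_getElem?_getD, Nat.lt_succ_of_le h, -List.ofFn_succ]
  · rw [List.getD_append_right _ _ _ _ (by simp [nbtCode]; omega)]
    have : j % (n + 2) = n + 1 := by omega
    simp [nbtCode, this]

lemma maximalCode_nbt (m n : ℕ) (hm : 0 < m) (hn : 2 * m < n) (hc : Nat.Coprime m n) (b : Bool) :
    maximalCode (nbtCode m n ++ [b]) := by
  intro i _
  set s := periodicSeq (nbtCode m n ++ [b]) with hs
  have hper : (fun k => s (k + i)) = fun k => s (k + i % (n + 2)) := by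
    funext k
    simp only [hs, periodicSeq_nbt, Nat.add_mod_mod]
  rw [hper]
  have hlt := Nat.mod_lt i (show 0 < n + 2 by omega)
  generalize i % (n + 2) = i at hlt
  rcases Nat.eq_zero_or_pos i with rfl | hi
  · exact Or.inl rfl
  have hbit : ∀ j ≤ n, s j = nbtBit m n j := by
    intro j hj
    rw [hs, periodicSeq_nbt, Nat.mod_eq_of_lt (by omega), if_pos hj]
  have hlast : s (n + 1) = b := by
    rw [hs, periodicSeq_nbt, Nat.mod_eq_of_lt (by omega), if_neg (by omega)]
  have hs2 : s (n + 2) = s 0 := by simp [hs, periodicSeq_nbt]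
  have hs3 : s (n + 3) = s 1 := by
    simp only [hs, periodicSeq_nbt, show n + 3 = 1 + (n + 2) by ring, Nat.add_mod_right]
  have hT := parity_nbt m n hm hn hc s hbit
  have t2 : onesParity s (n + 2) = b := by
    rw [onesParity, hT n le_rfl, rot_end m n hm hn, hlast]
    simp [Nat.not_le.mpr hm]
  have t3 : onesParity s (n + 3) = xor b (onesParity s 1) := by
    rw [onesParity, t2, hs2]; simp [onesParity]
  have t4 : onesParity s (n + 4) = xor b (onesParity s 2) := by
    rw [onesParity, t3, hs3, onesParity.eq_2 s 1, Bool.xor_assoc]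
  exact Or.inr (gt_of_parity s i
    (exists_parity_gap m n hm hn b _ rfl hT t2 t3 t4 i hi (by omega)))

/-- for every rational `q ∈ (0,1/2)`, both `c_q 0` and `c_q 1` are maximal codes. -/
theorem nbt_codes_are_maximal (q : ℚ) (hq0 : 0 < q) (hq1 : q < 1 / 2) :
    maximalCode (nbtCodeQ q ++ [false]) ∧ maximalCode (nbtCodeQ q ++ [true]) := by
  have hnum : 0 < q.num := Rat.num_pos.mpr hq0
  have hm : 0 < q.num.toNat := by omega
  have hn : 2 * q.num.toNat < q.den := by
    have h := (Rat.lt_iff q (1 / 2)).mp hq1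
    norm_num at h
    omega
  have hc : Nat.Coprime q.num.toNat q.den := by
    have h := q.reduced
    rwa [show q.num.natAbs = q.num.toNat by omega] at h
  exact ⟨maximalCode_nbt _ _ hm hn hc false, maximalCode_nbt _ _ hm hn hc true⟩
end
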